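/- arXiv:2603.28485 — 3 statements merged into one kernel-verified Lean document; each statement's English description precedes it below -/
import Mathlib

section
/- Let m > 4 and let e be a positive integer with gcd(e, 2^m − 1) = 1. Let Q ∈ F_{2^m}[X] be a polynomial of odd degree t whose evaluation map is a permutation of F_{2^m}, and assume 3·e·t ≤ 2^{m/4} − 1 (an inequality of real numbers). Let a, b, c, d ∈ F_{2^m} with ad + bc ≠ 0, and define f̃ : F_{2^m} × F_{2^m} → F_2 by f̃(x,y) = Tr_1^m(Q((bx + dy) · ((ax + cy)⁻¹)^e)). Then the second-order derivative D_{(1,0)} D_{(0,1)} f̃, i.e., the function (x,y) ↦ f̃(x+1,y+1) + f̃(x+1,y) + f̃(x,y+1) + f̃(x,y), is not constant on F_{2^m} × F_{2^m}. -/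
/-- The second-order derivative `D_u D_v f (x) = f x + f (x+u) + f (x+v) + f (x+u+v)`. -/
def D2 {V : Type*} [AddCommGroup V] (f : V → ZMod 2) (u v x : V) : ZMod 2 :=
  f x + f (x + u) + f (x + v) + f (x + u + v)

/-- The absolute trace map of `F_{2^m}`. -/
noncomputable def Tr (m : ℕ) (x : GaloisField 2 m) : ZMod 2 :=
  Algebra.trace (ZMod 2) (GaloisField 2 m) x

open Polynomial in
/-- power sums -/
theorem aux_sum_pow {F : Type*} [Field F] [Fintype F] (s : ℕ) (hs : 0 < s) :
    ∑ x : F, x ^ s = if (Fintype.card F - 1) ∣ s then -1 else 0 := by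
  classical
  have hq := Fintype.one_lt_card (α := F)
  split_ifs with h
  · obtain ⟨k, rfl⟩ := h
    have : ∀ x : F, x ^ ((Fintype.card F - 1) * k) = 1 - if x = 0 then 1 else 0 := by
      intro x
      split_ifs with hx
      · subst hx; rw [zero_pow hs.ne']; simp
      · rw [pow_mul, FiniteField.pow_card_sub_one_eq_one x hx]; simp
    simp [this]
  · have hr : 0 < s % (Fintype.card F - 1) := by
      rw [Nat.pos_iff_ne_zero]; intro h0; exact h (Nat.dvd_of_mod_eq_zero h0)
    have : ∀ x : F, x ^ s = x ^ (s % (Fintype.card F - 1)) := by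
      intro x
      by_cases hx : x = 0
      · subst hx; rw [zero_pow hs.ne', zero_pow hr.ne']
      · conv_lhs => rw [← Nat.mod_add_div s (Fintype.card F - 1), pow_add, pow_mul,
          FiniteField.pow_card_sub_one_eq_one x hx]
        simp
    simp_rw [this]
    exact FiniteField.sum_pow_lt_card_sub_one F _ (Nat.mod_lt _ (by omega))

theorem aux_arith (m t n i j : ℕ) (ht : 81 * t ^ 2 ≤ 2 ^ m) (hi : i < m) (hn : 0 < n) (hnt : n ≤ t)
    (hj : j ≤ t) (htj : t < 2 * j) (hd : (2 ^ m - 1) ∣ (2 ^ m - 1 - j + n * 2 ^ i)) :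
    n * 2 ^ i = j := by
  have hq : 2 ^ m = 2 ^ i * 2 ^ (m - i) := by rw [← pow_add]; congr 1; omega
  have h1 : 1 ≤ 2 ^ i := Nat.one_le_two_pow
  have h2 : 2 ≤ 2 ^ (m - i) := by
    calc 2 = 2 ^ 1 := rfl
      _ ≤ _ := Nat.pow_le_pow_right (by norm_num) (by omega)
  generalize 2 ^ i = A at *
  generalize 2 ^ (m - i) = B at *
  generalize 2 ^ m = q at *
  have htt : t ≤ t ^ 2 := by nlinarith
  have hmod : (n * A) ≡ j [MOD (q - 1)] := by
    have hh : q - 1 - j + n * A + j = n * A + (q - 1) := by omega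
    have e1 : 0 + j ≡ (q - 1 - j + n * A) + j [MOD (q - 1)] :=
      Nat.ModEq.add_right _ ((Nat.modEq_zero_iff_dvd.2 hd).symm)
    rw [hh] at e1
    have e2 : n * A + (q - 1) ≡ n * A [MOD (q - 1)] := by simp [Nat.ModEq]
    simpa using (e1.trans e2).symm
  by_cases hA : t * A < q - 1
  · have : n * A < q - 1 := lt_of_le_of_lt (Nat.mul_le_mul_right _ hnt) hA
    exact Nat.ModEq.eq_of_lt_of_lt hmod this (by omega)
  · exfalso
    have hB : t * B < q - 1 := by
      by_contra hB
      have h3 : q ≤ t * A + 1 := by omega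
      have h4 : q ≤ t * B + 1 := by omega
      have h3' : q ≤ 2 * (t * A) := by nlinarith
      have h4' : q ≤ 2 * (t * B) := by nlinarith
      have : q * q ≤ 4 * (t ^ 2 * q) := by
        calc q * q ≤ (2 * (t * A)) * (2 * (t * B)) := Nat.mul_le_mul h3' h4'
          _ = _ := by rw [hq]; ring
      nlinarith
    have hm2 : n * A * B ≡ j * B [MOD (q - 1)] := hmod.mul_right B
    have hm3 : n * A * B ≡ n [MOD (q - 1)] := by
      have : n * A * B = n + n * (q - 1) := by
        have : q - 1 + 1 = q := by omega
        calc n * A * B = n * q := by rw [hq]; ring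
          _ = n * (q - 1 + 1) := by rw [this]
          _ = _ := by ring
      rw [this]; simp [Nat.ModEq]
    have h5 := Nat.ModEq.eq_of_lt_of_lt (hm3.symm.trans hm2) (by omega)
      (lt_of_le_of_lt (Nat.mul_le_mul_right _ hj) hB)
    nlinarith

open Polynomial in
theorem aux_coeff {F : Type*} [Field F] [Fintype F] [CharP F 2] (m : ℕ)
    (hF : Fintype.card F = 2 ^ m) (t j : ℕ) (ht : 81 * t ^ 2 ≤ 2 ^ m)
    (hj : j ≤ t) (htj : t < 2 * j) (R : F[X]) (hR : R.natDegree ≤ t) (ε : F)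
    (h : ∀ v : F, ∑ i ∈ Finset.range m, (R.eval v) ^ 2 ^ i = ε) :
    ∑ i ∈ Finset.range m, ∑ n ∈ Finset.range (t + 1),
      (if n * 2 ^ i = j then R.coeff n ^ 2 ^ i else 0) = 0 := by
  have htt : t ≤ t ^ 2 := by nlinarith
  have h0 : ∑ v : F, v ^ (2 ^ m - 1 - j) * ε = 0 := by
    rw [← Finset.sum_mul, FiniteField.sum_pow_lt_card_sub_one F _ (by rw [hF]; omega), zero_mul]
  have hexp : ∀ v : F, ∀ i : ℕ, (R.eval v) ^ 2 ^ i =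
      ∑ n ∈ Finset.range (t + 1), R.coeff n ^ 2 ^ i * v ^ (n * 2 ^ i) := by
    intro v i
    rw [eval_eq_sum_range' (Nat.lt_succ_of_le hR), sum_pow_char_pow 2 i]
    simp [mul_pow, pow_mul]
  have h1 : ∑ v : F, v ^ (2 ^ m - 1 - j) * (∑ i ∈ Finset.range m, (R.eval v) ^ 2 ^ i) = 0 := by
    rw [← h0]; exact Finset.sum_congr rfl fun v _ => by rw [h v]
  clear h0
  rename' h1 => h0
  simp_rw [hexp, Finset.mul_sum] at h0
  rw [Finset.sum_comm] at h0
  refine neg_eq_zero.1 (Eq.trans ?_ h0)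
  rw [← Finset.sum_neg_distrib]
  refine Finset.sum_congr rfl fun i hi => ?_
  rw [Finset.sum_comm, ← Finset.sum_neg_distrib]
  refine Finset.sum_congr rfl fun n hn => ?_
  have e : ∀ v : F, v ^ (2 ^ m - 1 - j) * (R.coeff n ^ 2 ^ i * v ^ (n * 2 ^ i)) =
      R.coeff n ^ 2 ^ i * v ^ (2 ^ m - 1 - j + n * 2 ^ i) := by intro v; ring
  simp_rw [e]
  rw [← Finset.mul_sum, aux_sum_pow _ (by omega), hF]
  simp only [Finset.mem_range] at hi hn
  by_cases hnj : n * 2 ^ i = j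
  · rw [if_pos hnj, if_pos]
    · ring
    · rw [hnj]; exact ⟨1, by omega⟩
  · rw [if_neg hnj, if_neg]
    · ring
    · intro hd
      rcases Nat.eq_zero_or_pos n with h0 | hn0
      · subst h0
        have := Nat.le_of_dvd (by omega) hd
        omega
      · exact hnj (aux_arith m t n i j ht hi hn0 (by omega) hj htj hd)

open Polynomial in
theorem aux_pole {F : Type*} [Field F] [Fintype F] (A B : F[X]) (D e : ℕ) (hD : 0 < D) (he : 0 < e)
    (hA : A.natDegree ≤ D) (hB : B.natDegree ≤ D) (c : F) (hc : c ≠ 0)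
    (hq : 2 * (e * D) + 2 < Fintype.card F)
    (h : ∀ u : F, u ≠ 0 → u + c ≠ 0 → A.eval (u⁻¹ ^ e) + B.eval ((u + c)⁻¹ ^ e) = 0) :
    A.coeff D = 0 := by
  have hrefl : ∀ (P : F[X]), P.natDegree ≤ D → ∀ x : F, x ≠ 0 →
      (reflect D P).eval x = P.eval x⁻¹ * x ^ D := by
    intro P hP x hx
    let _ : Invertible (x⁻¹) := invertibleOfNonzero (inv_ne_zero hx)
    have := eval₂_reflect_mul_pow (RingHom.id F) (x⁻¹) D P hP
    simp only [invOf_eq_inv, inv_inv] at this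
    change (reflect D P).eval x * x⁻¹ ^ D = P.eval x⁻¹ at this
    rw [← this, mul_assoc, ← mul_pow, inv_mul_cancel₀ hx]; simp
  set K : F[X] := (reflect D A).comp (X ^ e) * (X + C c) ^ (e * D) +
    X ^ (e * D) * (reflect D B).comp ((X + C c) ^ e) with hK
  have hdegr : ∀ (P : F[X]), P.natDegree ≤ D → (reflect D P).natDegree ≤ D := fun P hP =>
    natDegree_reflect_le.trans (by simp [hP])
  have hKd : K.natDegree ≤ 2 * (e * D) := by
    refine (natDegree_add_le _ _).trans (max_le ?_ ?_)
    · refine natDegree_mul_le.trans ?_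
      have h1 : ((reflect D A).comp (X ^ e)).natDegree ≤ D * e := by
        refine natDegree_comp_le.trans (Nat.mul_le_mul (hdegr A hA) (natDegree_X_pow_le _))
      have h2 : ((X + C c) ^ (e * D)).natDegree ≤ e * D := by simp
      linarith [mul_comm D e]
    · refine natDegree_mul_le.trans ?_
      have h1 : ((reflect D B).comp ((X + C c) ^ e)).natDegree ≤ D * e := by
        refine natDegree_comp_le.trans (Nat.mul_le_mul (hdegr B hB) (by simp))
      have h2 : ((X : F[X]) ^ (e * D)).natDegree ≤ e * D := by simp
      linarith [mul_comm D e]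
  have hz : K * (X * (X + C c)) = 0 := by
    apply eq_zero_of_natDegree_lt_card_of_eval_eq_zero _ (Function.injective_id (α := F))
    · intro u
      simp only [id, eval_mul, eval_X, eval_add, eval_C]
      by_cases hu : u = 0
      · simp [hu]
      by_cases hu' : u + c = 0
      · simp [hu']
      have : K.eval u = 0 := by
        simp only [hK, eval_add, eval_mul, eval_comp, eval_pow, eval_X, eval_C]
        rw [hrefl A hA _ (pow_ne_zero _ hu), hrefl B hB _ (pow_ne_zero _ hu')]
        have := h u hu hu'
        rw [inv_pow, inv_pow] at this
        linear_combination u ^ (e * D) * (u + c) ^ (e * D) * this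
      rw [this, zero_mul]
    · refine lt_of_le_of_lt ?_ hq
      refine natDegree_mul_le.trans (Nat.add_le_add hKd ?_)
      refine natDegree_mul_le.trans ?_
      simp
  have hK0 : K = 0 := by
    rcases mul_eq_zero.1 hz with h1 | h1
    · exact h1
    · exact absurd h1 (mul_ne_zero X_ne_zero (X_add_C_ne_zero c))
  have h00 : K.eval 0 = 0 := by rw [hK0]; simp
  simp only [hK, eval_add, eval_mul, eval_comp, eval_pow, eval_X, eval_C, zero_add,
    zero_pow he.ne', zero_pow (Nat.mul_pos he hD).ne', zero_mul, add_zero] at h00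
  rw [← coeff_zero_eq_eval_zero, coeff_reflect, revAt_le (Nat.zero_le D), Nat.sub_zero] at h00
  rcases mul_eq_zero.1 h00 with h1 | h1
  · exact h1
  · exact absurd h1 (pow_ne_zero _ hc)

open Polynomial in
theorem aux_R_coeff {F : Type*} [Field F] (Q : F[X]) (t : ℕ) (ht : Q.natDegree ≤ t) (α b : F) (n : ℕ) :
    (taylor b (Q.comp (C α * X))).coeff n =
      ∑ l ∈ Finset.range (t + 1), Q.coeff l * (l.choose n : F) * b ^ (l - n) * α ^ l := by
  have hd : (Q.comp (C α * X)).natDegree < t + 1 := by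
    refine Nat.lt_succ_of_le (natDegree_comp_le.trans ?_)
    calc _ ≤ t * 1 := Nat.mul_le_mul ht ((natDegree_C_mul_le _ _).trans natDegree_X_le)
      _ = t := mul_one t
  rw [taylor_coeff, hasseDeriv_apply, sum_over_range' _ _ (t + 1) hd, eval_finsetSum]
  · refine Finset.sum_congr rfl fun l _ => ?_
    rw [eval_monomial, comp_C_mul_X_coeff]; ring
  · intro n; simp

open Polynomial in
theorem aux_R_deg {F : Type*} [Field F] (Q : F[X]) (t : ℕ) (ht : Q.natDegree ≤ t) (α b : F) :
    (taylor b (Q.comp (C α * X))).natDegree ≤ t := by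
  rw [natDegree_taylor]
  refine (natDegree_comp_le.trans ?_)
  calc _ ≤ t * 1 := Nat.mul_le_mul ht ((natDegree_C_mul_le _ _).trans natDegree_X_le)
    _ = t := mul_one t

open Polynomial in
theorem aux_R_eval {F : Type*} [Field F] (Q : F[X]) (α b v : F) :
    (taylor b (Q.comp (C α * X))).eval v = Q.eval ((v + b) * α) := by
  rw [taylor_eval, eval_comp]; simp only [eval_mul, eval_C, eval_X]; rw [mul_comm]

theorem aux_S_add {F : Type*} [Field F] [CharP F 2] (m : ℕ) (x y : F) :
    ∑ i ∈ Finset.range m, (x + y) ^ 2 ^ i =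
    ∑ i ∈ Finset.range m, x ^ 2 ^ i + ∑ i ∈ Finset.range m, y ^ 2 ^ i := by
  rw [← Finset.sum_add_distrib]
  exact Finset.sum_congr rfl fun i _ => by rw [add_pow_char_pow]

open Polynomial in
theorem aux_indep {F : Type*} [Field F] [Fintype F] [CharP F 2] (m : ℕ)
    (hF : Fintype.card F = 2 ^ m) (Q : F[X]) (e t : ℕ) (he : 0 < e) (ht : Q.natDegree = t)
    (htodd : Odd t) (hb : (3 * (e * t) + 1) ^ 4 ≤ 2 ^ m) (a b c d ε : F)
    (ha : a ≠ 0) (hc : c ≠ 0) (hac : a + c ≠ 0)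
    (H : ∀ u v : F, ∑ i ∈ Finset.range m, (Q.eval (v * u⁻¹ ^ e) + Q.eval ((v + b) * (u + a)⁻¹ ^ e)
      + Q.eval ((v + d) * (u + c)⁻¹ ^ e) + Q.eval ((v + (b + d)) * (u + (a + c))⁻¹ ^ e)) ^ 2 ^ i = ε) :
    False := by
  have ht0 : 0 < t := htodd.pos
  have hQt : Q.coeff t ≠ 0 := by
    rw [← ht]; intro h0
    have : Q = 0 := leadingCoeff_eq_zero.1 h0
    rw [this] at ht; simp at ht; omega
  have hN : 1 ≤ e * t := Nat.mul_pos he ht0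
  have htN : t ≤ e * t := Nat.le_mul_of_pos_left t he
  have h81 : 81 * t ^ 2 ≤ 2 ^ m := by
    refine le_trans ?_ hb
    calc 81 * t ^ 2 ≤ 81 * (e * t) ^ 2 := by gcongr
      _ ≤ 81 * (e * t) ^ 4 := by gcongr <;> omega
      _ = (3 * (e * t)) ^ 4 := by ring
      _ ≤ _ := by gcongr; omega
  have key : ∀ u : F, (u⁻¹ ^ e) ^ t + ((u + a)⁻¹ ^ e) ^ t + ((u + c)⁻¹ ^ e) ^ t
      + ((u + (a + c))⁻¹ ^ e) ^ t = 0 := by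
    intro u
    have h1 := aux_coeff m hF t t h81 le_rfl (by omega)
      (taylor 0 (Q.comp (C (u⁻¹ ^ e) * X)) + taylor b (Q.comp (C ((u + a)⁻¹ ^ e) * X))
      + taylor d (Q.comp (C ((u + c)⁻¹ ^ e) * X))
      + taylor (b + d) (Q.comp (C ((u + (a + c))⁻¹ ^ e) * X)))
      (by
        have := aux_R_deg Q t ht.le
        refine (natDegree_add_le _ _).trans (max_le ((natDegree_add_le _ _).trans (max_le
          ((natDegree_add_le _ _).trans (max_le ?_ ?_)) ?_)) ?_) <;> apply this) ε
      (by
        intro v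
        simp only [eval_add, aux_R_eval, add_zero]
        exact H u v)
    have hm : 0 < m := by
      rcases Nat.eq_zero_or_pos m with h | h
      · subst h; nlinarith
      · exact h
    rw [Finset.sum_eq_single_of_mem 0 (Finset.mem_range.2 hm),
      Finset.sum_eq_single_of_mem t (by simp)] at h1
    · have hco : ∀ α b : F, (taylor b (Q.comp (C α * X))).coeff t = Q.coeff t * α ^ t := by
        intro α b
        rw [aux_R_coeff Q t ht.le, Finset.sum_range_succ, Finset.sum_eq_zero]
        · simp
        · intro l hl
          rw [Nat.choose_eq_zero_of_lt (Finset.mem_range.1 hl)]; simp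
      simp only [pow_zero, mul_one, if_true, pow_one, coeff_add, hco] at h1
      rw [← mul_add, ← mul_add, ← mul_add] at h1
      exact (mul_eq_zero.1 h1).resolve_left hQt
    · intro n _ hn
      rw [if_neg (by simpa using hn)]
    · intro i _ hi
      refine Finset.sum_eq_zero fun n _ => if_neg ?_
      rintro rfl
      have : Even (n * 2 ^ i) := by
        refine Even.mul_left ?_ _
        exact (Nat.even_pow.2 ⟨even_two, hi⟩)
      exact (Nat.not_even_iff_odd.2 htodd) this
  set N := e * t with hNdef
  simp_rw [← pow_mul, ← hNdef] at key
  have dd : ∀ z : F, ((X + C z) ^ N).natDegree = N := by intro z; simp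
  set K : F[X] := (X + C a) ^ N * (X + C c) ^ N * (X + C (a + c)) ^ N
    + X ^ N * (X + C c) ^ N * (X + C (a + c)) ^ N
    + X ^ N * (X + C a) ^ N * (X + C (a + c)) ^ N
    + X ^ N * (X + C a) ^ N * (X + C c) ^ N with hK
  have hKd : K.natDegree ≤ N + N + N := by
    have h3 : ∀ A B D : F[X], A.natDegree ≤ N → B.natDegree ≤ N → D.natDegree ≤ N →
        (A * B * D).natDegree ≤ N + N + N := fun A B D hA hB hD =>
      natDegree_mul_le.trans (Nat.add_le_add (natDegree_mul_le.trans (Nat.add_le_add hA hB)) hD)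
    have hX : ((X : F[X]) ^ N).natDegree ≤ N := by simp
    refine (natDegree_add_le _ _).trans (max_le ((natDegree_add_le _ _).trans (max_le
          ((natDegree_add_le _ _).trans (max_le ?_ ?_)) ?_)) ?_) <;> apply h3 <;>
      first | exact hX | exact (dd _).le
  have hz : K * ((X * (X + C a)) * ((X + C c) * (X + C (a + c)))) = 0 := by
    apply eq_zero_of_natDegree_lt_card_of_eval_eq_zero _ (Function.injective_id (α := F))
    · intro u
      simp only [id, eval_mul, eval_X, eval_add, eval_C]
      by_cases h1 : u = 0
      · simp [h1]
      by_cases h2 : u + a = 0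
      · simp [h2]
      by_cases h3 : u + c = 0
      · simp [h3]
      by_cases h4 : u + (a + c) = 0
      · simp [h4]
      have : K.eval u = 0 := by
        simp only [hK, eval_add, eval_mul, eval_pow, eval_X, eval_C]
        have hk := key u
        simp only [inv_pow] at hk
        have p1 := pow_ne_zero N h1
        have p2 := pow_ne_zero N h2
        have p3 := pow_ne_zero N h3
        have p4 := pow_ne_zero N h4
        generalize u ^ N = A at *
        generalize (u + a) ^ N = A2 at *
        generalize (u + c) ^ N = A3 at *
        generalize (u + (a + c)) ^ N = A4 at *
        have : A2 * A3 * A4 + A * A3 * A4 + A * A2 * A4 + A * A2 * A3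
          = (A⁻¹ + A2⁻¹ + A3⁻¹ + A4⁻¹) * (A * A2 * A3 * A4) := by field_simp
        rw [this, hk, zero_mul]
      rw [this, zero_mul]
    · have hle : (K * ((X * (X + C a)) * ((X + C c) * (X + C (a + c))))).natDegree
          ≤ (N + N + N) + ((1 + 1) + (1 + 1)) := by
        refine natDegree_mul_le.trans (Nat.add_le_add hKd (natDegree_mul_le.trans (Nat.add_le_add
          (natDegree_mul_le.trans (Nat.add_le_add ?_ ?_))
          (natDegree_mul_le.trans (Nat.add_le_add ?_ ?_))))) <;>
        first | exact natDegree_X_le | exact (natDegree_X_add_C _).le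
      rw [hF]
      refine lt_of_le_of_lt hle (lt_of_lt_of_le ?_ hb)
      have : 4 ≤ 3 * N + 1 := by omega
      nlinarith [Nat.pow_le_pow_left this 3]
  have hK0 : K = 0 := by
    refine (mul_eq_zero.1 hz).resolve_right ?_
    exact mul_ne_zero (mul_ne_zero X_ne_zero (X_add_C_ne_zero _))
      (mul_ne_zero (X_add_C_ne_zero _) (X_add_C_ne_zero _))
  have h00 : K.eval 0 = 0 := by rw [hK0]; simp
  have hN0 : N ≠ 0 := by omega
  simp [hK, hN0, ha, hc, hac] at h00

open Polynomial in
theorem aux_dep {F : Type*} [Field F] [Fintype F] [CharP F 2] (m : ℕ)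
    (hF : Fintype.card F = 2 ^ m) (Q : F[X]) (e t : ℕ) (he : 0 < e) (ht : Q.natDegree = t)
    (htodd : Odd t) (ht1 : t ≠ 1) (hb : (3 * (e * t) + 1) ^ 4 ≤ 2 ^ m) (b c d ε : F)
    (hb0 : b ≠ 0) (hc : c ≠ 0)
    (H : ∀ u v : F, ∑ i ∈ Finset.range m, (Q.eval (v * u⁻¹ ^ e) + Q.eval ((v + b) * u⁻¹ ^ e)
      + Q.eval ((v + d) * (u + c)⁻¹ ^ e) + Q.eval ((v + (b + d)) * (u + c)⁻¹ ^ e)) ^ 2 ^ i = ε) :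
    False := by
  have ht0 : 0 < t := htodd.pos
  have hQt : Q.coeff t ≠ 0 := by
    rw [← ht]; intro h0
    have : Q = 0 := leadingCoeff_eq_zero.1 h0
    rw [this] at ht; simp at ht; omega
  have hN : 1 ≤ e * t := Nat.mul_pos he ht0
  have htN : t ≤ e * t := Nat.le_mul_of_pos_left t he
  have h81' : 81 * (e * t) ^ 2 ≤ 2 ^ m := by
    refine le_trans ?_ hb
    calc 81 * (e * t) ^ 2 ≤ 81 * (e * t) ^ 4 := by gcongr <;> omega
      _ = (3 * (e * t)) ^ 4 := by ring
      _ ≤ _ := by gcongr; omega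
  have h81 : 81 * t ^ 2 ≤ 2 ^ m := by
    refine le_trans ?_ h81'
    gcongr
  set I := Nat.log 2 t with hI
  have hj1 : 2 ^ I ≤ t := Nat.pow_log_le_self 2 ht0.ne'
  have hj2 : t < 2 * 2 ^ I := by
    have := Nat.lt_pow_succ_log_self (b := 2) (by norm_num) t
    rw [← hI, pow_succ] at this; omega
  have hIm : I < m := by
    by_contra h
    have : 2 ^ m ≤ 2 ^ I := Nat.pow_le_pow_right (by norm_num) (by omega)
    nlinarith
  set W : ℕ → F → F → F[X] := fun n b b' => ∑ l ∈ Finset.range (t + 1),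
    C (Q.coeff l * (l.choose n : F) * (b ^ (l - n) + b' ^ (l - n))) * X ^ l with hW
  have hWd : ∀ n b b', (W n b b').natDegree ≤ t := by
    intro n b b'
    refine natDegree_sum_le_of_forall_le _ _ fun l hl => ?_
    exact (natDegree_C_mul_X_pow_le _ _).trans (by simp at hl; omega)
  have hWc : (W 1 0 b).coeff t = Q.coeff t * b ^ (t - 1) := by
    simp only [hW, finsetSum_coeff, coeff_C_mul, coeff_X_pow]
    rw [Finset.sum_eq_single_of_mem t (by simp)]
    · have : ((t : ℕ) : F) = 1 := by
        obtain ⟨k, rfl⟩ := htodd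
        push_cast
        rw [CharTwo.two_eq_zero]; ring
      have h1 : t - 1 ≠ 0 := by omega
      simp [this, zero_pow h1]
    · intro l _ hl
      rw [if_neg (Ne.symm hl), mul_zero]
  set Z : F → F → F[X] := fun b b' => ∑ i ∈ Finset.range m, ∑ n ∈ Finset.range (t + 1),
      (if n * 2 ^ i = 2 ^ I then W n b b' ^ 2 ^ i else 0) with hZ
  have hZd : ∀ b b', (Z b b').natDegree ≤ t * 2 ^ I := by
    intro b b'
    refine natDegree_sum_le_of_forall_le _ _ fun i hi => ?_
    refine natDegree_sum_le_of_forall_le _ _ fun n hn => ?_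
    split_ifs with h
    · refine natDegree_pow_le.trans ?_
      have hn0 : 0 < n := by
        rcases Nat.eq_zero_or_pos n with h0 | h0
        · subst h0
          have := Nat.pow_pos (n := I) (show 0 < 2 by norm_num)
          omega
        · exact h0
      have : 2 ^ i ≤ 2 ^ I := by rw [← h]; exact Nat.le_mul_of_pos_left _ hn0
      rw [mul_comm]
      exact Nat.mul_le_mul (hWd _ _ _) this
    · simp
  have hzero : (Z 0 b).coeff (t * 2 ^ I) = 0 := by
    refine aux_pole (Z 0 b) (Z d (b + d)) (t * 2 ^ I) e (by positivity) he (hZd _ _) (hZd _ _) c hc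
      ?_ ?_
    · rw [hF]
      refine lt_of_lt_of_le ?_ h81'
      have : e * (t * 2 ^ I) ≤ (e * t) ^ 2 := by
        calc e * (t * 2 ^ I) = (e * t) * 2 ^ I := by ring
          _ ≤ (e * t) * (e * t) := Nat.mul_le_mul_left _ (by omega)
          _ = _ := by ring
      nlinarith
    · intro u _ _
      have h1 := aux_coeff m hF t (2 ^ I) h81 hj1 hj2
        (taylor 0 (Q.comp (C (u⁻¹ ^ e) * X)) + taylor b (Q.comp (C (u⁻¹ ^ e) * X))
        + taylor d (Q.comp (C ((u + c)⁻¹ ^ e) * X))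
        + taylor (b + d) (Q.comp (C ((u + c)⁻¹ ^ e) * X)))
        (by
          have := aux_R_deg Q t ht.le
          refine (natDegree_add_le _ _).trans (max_le ((natDegree_add_le _ _).trans (max_le
            ((natDegree_add_le _ _).trans (max_le ?_ ?_)) ?_)) ?_) <;> apply this) ε
        (by
          intro v
          simp only [eval_add, aux_R_eval, add_zero]
          exact H u v)
      refine Eq.trans ?_ h1
      simp only [hZ, eval_finsetSum]
      rw [← Finset.sum_add_distrib]
      refine Finset.sum_congr rfl fun i _ => ?_
      rw [← Finset.sum_add_distrib]
      refine Finset.sum_congr rfl fun n _ => ?_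
      split_ifs
      · rw [eval_pow, eval_pow, ← add_pow_char_pow]
        congr 1
        simp only [hW, coeff_add, aux_R_coeff Q t ht.le, eval_finsetSum]
        rw [← Finset.sum_add_distrib, ← Finset.sum_add_distrib, ← Finset.sum_add_distrib,
          ← Finset.sum_add_distrib]
        refine Finset.sum_congr rfl fun l _ => ?_
        simp only [eval_mul, eval_C, eval_pow, eval_X]
        ring
      · simp
  have hval : (Z 0 b).coeff (t * 2 ^ I) = (W 1 0 b).coeff t ^ 2 ^ I := by
    have h2I := Nat.pow_pos (n := I) (show 0 < 2 by norm_num)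
    simp only [hZ, finsetSum_coeff]
    rw [Finset.sum_eq_single_of_mem I (Finset.mem_range.2 hIm),
      Finset.sum_eq_single_of_mem 1 (by simp; omega)]
    · rw [if_pos (one_mul _), mul_comm, coeff_pow_of_natDegree_le (hWd _ _ _)]
    · intro n _ hn
      rw [if_neg, coeff_zero]
      intro h
      exact hn (Nat.eq_of_mul_eq_mul_right h2I (by rw [h, one_mul]))
    · intro i _ hi
      refine Finset.sum_eq_zero fun n _ => ?_
      split_ifs with h
      · apply coeff_eq_zero_of_natDegree_lt
        have hn0 : 0 < n := by
          rcases Nat.eq_zero_or_pos n with h0 | h0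
          · subst h0; omega
          · exact h0
        have h3 : 2 ^ i ≤ 2 ^ I := by rw [← h]; exact Nat.le_mul_of_pos_left _ hn0
        have h4 : 2 ^ i < 2 ^ I := lt_of_le_of_ne h3 fun hh =>
          hi (Nat.pow_right_injective (le_refl 2) hh)
        calc _ ≤ 2 ^ i * t := natDegree_pow_le.trans (Nat.mul_le_mul_left _ (hWd _ _ _))
          _ < 2 ^ I * t := Nat.mul_lt_mul_of_pos_right h4 ht0
          _ = _ := mul_comm _ _
      · simp
  rw [hval, hWc] at hzero
  exact pow_ne_zero _ (mul_ne_zero hQt (pow_ne_zero _ hb0)) hzero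

theorem aux_res (m e i : ℕ) (heo : Odd e) (hb : 9 * e ^ 2 ≤ 2 ^ m) (hi : 3 ≤ i) (him : i < m) :
    8 * e ≤ (e * 2 ^ i) % (2 ^ m - 1) := by
  have hq : 2 ^ m = 2 ^ i * 2 ^ (m - i) := by rw [← pow_add]; congr 1; omega
  have h8 : 2 ^ 3 ≤ 2 ^ i := Nat.pow_le_pow_right (by norm_num) hi
  have hodd : 1 ≤ e % 2 ^ (m - i) := by
    by_contra h
    have h0 : e % 2 ^ (m - i) = 0 := by omega
    have : 2 ∣ e := (dvd_pow_self 2 (by omega)).trans (Nat.dvd_of_mod_eq_zero h0)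
    exact (Nat.not_even_iff_odd.2 heo) (even_iff_two_dvd.2 this)
  have hB0 : 0 < 2 ^ (m - i) := by positivity
  have hlt := Nat.mod_lt e hB0
  have hdiv := Nat.div_add_mod e (2 ^ (m - i))
  generalize e / 2 ^ (m - i) = A at *
  generalize e % 2 ^ (m - i) = r at *
  generalize 2 ^ (m - i) = B at *
  generalize 2 ^ i = P at *
  generalize 2 ^ m = q at *
  have he : 1 ≤ e := heo.pos
  -- e * P = A * q + P * r
  have h1 : e * P = A + P * r + A * (q - 1) := by
    have : q - 1 + 1 = q := by have : 0 < P * B := by positivity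
                               omega
    calc e * P = A * q + P * r := by rw [hq, ← hdiv]; ring
      _ = A * (q - 1 + 1) + P * r := by rw [this]
      _ = _ := by ring
  have hAe : A * B ≤ e := by rw [← hdiv, mul_comm]; omega
  have hPr : P * r + P ≤ q := by
    rw [hq]; calc P * r + P = P * (r + 1) := by ring
      _ ≤ P * B := Nat.mul_le_mul_left _ hlt
  have hA : A + 1 < P := by
    have h2 : A * B * e * 9 ≤ P * B := by
      rw [← hq]; refine le_trans ?_ hb
      nlinarith
    have h3 : A * e * 9 ≤ P := by
      have : (A * e * 9) * B ≤ P * B := by linarith [h2, show A * e * 9 * B = A * B * e * 9 by ring]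
      exact Nat.le_of_mul_le_mul_right this hB0
    have h4 : A ≤ A * e := Nat.le_mul_of_pos_right A he
    omega
  rw [h1, Nat.add_mul_mod_self_right, Nat.mod_eq_of_lt (by omega)]
  rcases Nat.eq_zero_or_pos A with h0 | h0
  · subst h0
    have : r = e := by omega
    subst this
    nlinarith
  · have hBe : B ≤ e := le_trans (Nat.le_mul_of_pos_left B h0) hAe
    have : 9 * e * e ≤ P * e := by
      calc 9 * e * e = 9 * e ^ 2 := by ring
        _ ≤ q := hb
        _ = P * B := hq
        _ ≤ P * e := Nat.mul_le_mul_left _ hBe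
    have := Nat.le_of_mul_le_mul_right this he
    nlinarith

open Polynomial in
set_option maxHeartbeats 1000000 in
theorem aux_lin_odd {F : Type*} [Field F] [Fintype F] [CharP F 2] (m : ℕ)
    (hF : Fintype.card F = 2 ^ m) (e : ℕ) (heo : Odd e) (hb : (3 * e + 1) ^ 4 ≤ 2 ^ m)
    (k c ε : F) (hk : k ≠ 0) (hc : c ≠ 0)
    (H : ∀ u : F, ∑ i ∈ Finset.range m, (k * (u⁻¹ ^ e + (u + c)⁻¹ ^ e)) ^ 2 ^ i = ε) : False := by
  have he : 1 ≤ e := heo.pos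
  have hb4 : 4 ≤ 3 * e + 1 := by omega
  have hb3 : 64 ≤ (3 * e + 1) ^ 3 := Nat.pow_le_pow_left hb4 3
  have hb5 : 64 * (3 * e + 1) ≤ 2 ^ m := by
    refine le_trans ?_ hb; rw [pow_succ (3 * e + 1) 3]; exact Nat.mul_le_mul_right _ hb3
  have hb2 : 9 * e ^ 2 ≤ 2 ^ m := by
    refine le_trans ?_ hb
    calc 9 * e ^ 2 ≤ (3 * e + 1) ^ 2 := by nlinarith
      _ ≤ _ := Nat.pow_le_pow_right (by omega) (by norm_num)
  have hm3 : 3 ≤ m := by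
    by_contra h
    have : 2 ^ m ≤ 2 ^ 3 := Nat.pow_le_pow_right (by norm_num) (by omega)
    omega
  set q := 2 ^ m with hq
  set r : ℕ → ℕ := fun i => (e * 2 ^ i) % (q - 1) with hr
  have hrlt : ∀ i, r i < q - 1 := fun i => Nat.mod_lt _ (by omega)
  have hpow : ∀ (x : F) (i : ℕ), (x⁻¹ ^ e) ^ 2 ^ i = x ^ (q - 1 - r i) := by
    intro x i
    have hri := hrlt i
    by_cases hx : x = 0
    · subst hx
      rw [zero_pow (by omega : q - 1 - r i ≠ 0), inv_zero, zero_pow (by omega : e ≠ 0),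
        zero_pow (by positivity)]
    · have h1 : x ^ (q - 1) = 1 := by rw [← hF]; exact FiniteField.pow_card_sub_one_eq_one x hx
      have h2 : x ^ (e * 2 ^ i) = x ^ (r i) := by
        conv_lhs => rw [← Nat.mod_add_div (e * 2 ^ i) (q - 1), pow_add, pow_mul, h1]
        simp [hr]
      rw [← pow_mul, inv_pow, h2]
      refine inv_eq_of_mul_eq_one_right ?_
      rw [← pow_add, show r i + (q - 1 - r i) = q - 1 by omega, h1]
  set T : ℕ → F[X] := fun n => X ^ n + (X + C c) ^ n with hT
  set G : F[X] := ∑ i ∈ Finset.range m, C (k ^ 2 ^ i) * T (q - 1 - r i) - C ε with hG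
  have hTd : ∀ n, (T n).natDegree ≤ n := by
    intro n
    refine (natDegree_add_le _ _).trans (max_le ?_ ?_) <;> simp
  have hTd' : ∀ n, (T n).natDegree ≤ n - 1 := by
    intro n
    rw [natDegree_le_iff_coeff_eq_zero]
    intro N hN
    rcases Nat.lt_or_ge n N with h | h
    · exact coeff_eq_zero_of_natDegree_lt (lt_of_le_of_lt (hTd n) h)
    · obtain rfl : N = n := by omega
      have h1 : ((X + C c) ^ N).coeff N = 1 := by simp [coeff_X_add_C_pow]
      simp only [hT, coeff_add, h1, coeff_X_pow, if_true]
      exact CharTwo.add_self_eq_zero 1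
  have hG0 : G = 0 := by
    apply eq_zero_of_natDegree_lt_card_of_eval_eq_zero _ (Function.injective_id (α := F))
    · intro u
      simp only [hG, hT, id, eval_sub, eval_finsetSum, eval_mul, eval_C, eval_add, eval_pow, eval_X]
      rw [sub_eq_zero, ← H u]
      refine Finset.sum_congr rfl fun i _ => ?_
      rw [mul_pow, add_pow_char_pow, hpow, hpow]
    · rw [hF]
      refine lt_of_le_of_lt (b := q - 1) ?_ (by omega)
      refine (natDegree_sub_le _ _).trans (max_le ?_ (by simp))
      refine natDegree_sum_le_of_forall_le _ _ fun i hi => ?_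
      refine (natDegree_C_mul_le _ _).trans ((hTd _).trans (by omega))
  set M : F[X] := X ^ (1 + 4 * e) * (X + C c) ^ (1 + 4 * e) with hM
  have hXd : ∀ n, ((X : F[X]) ^ n).natDegree ≤ n := fun n => natDegree_X_pow_le n
  have hYd : ∀ n, ((X + C c : F[X]) ^ n).natDegree ≤ n := fun n => by simp
  have hMd : M.natDegree ≤ 2 + 8 * e := by
    refine natDegree_mul_le.trans ((Nat.add_le_add (hXd _) (hYd _)).trans (by omega))
  have hres : ∀ i, 3 ≤ i → i < m → 8 * e ≤ r i := fun i h h' => aux_res m e i heo hb2 h h'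
  clear_value M T G r q
  have hYq : (X + C c : F[X]) ^ q = X ^ q + C c := by
    rw [hq, add_pow_char_pow, ← C_pow, ← hq, ← hF, FiniteField.pow_card]
  -- coefficient of the product in the small cases
  have hsmall : ∀ s, s ≤ 4 * e →
      (M * T (q - 1 - s)).coeff (q + 1) = (X ^ (4 * e - s) * (X + C c) ^ (1 + 4 * e)).coeff 1 := by
    intro s hs
    have e1 : M * T (q - 1 - s) = X ^ (4 * e - s) * (X + C c) ^ (1 + 4 * e) * X ^ q
        + (X + C c) ^ (4 * e - s) * X ^ (4 * e - 1) * X ^ (q + 2)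
        + C c * ((X + C c) ^ (4 * e - s) * X ^ (1 + 4 * e)) := by
      have a1 : (X : F[X]) ^ (1 + 4 * e) * X ^ (q - 1 - s) = X ^ (4 * e - s) * X ^ q := by
        rw [← pow_add, ← pow_add]; congr 1; omega
      have a2 : (X + C c : F[X]) ^ (1 + 4 * e) * (X + C c) ^ (q - 1 - s)
          = (X + C c) ^ (4 * e - s) * (X ^ q + C c) := by
        rw [← hYq, ← pow_add, ← pow_add]; congr 1; omega
      have a3 : (X : F[X]) ^ (1 + 4 * e) * X ^ q = X ^ (4 * e - 1) * X ^ (q + 2) := by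
        rw [← pow_add, ← pow_add]; congr 1; omega
      simp only [hM, hT]
      linear_combination (X + C c) ^ (1 + 4 * e) * a1 + X ^ (1 + 4 * e) * a2
        + (X + C c) ^ (4 * e - s) * a3
    rw [e1, coeff_add, coeff_add, add_comm q 1, coeff_mul_X_pow, coeff_mul_X_pow',
      if_neg (by omega), coeff_C_mul, coeff_eq_zero_of_natDegree_lt
        (p := (X + C c) ^ (4 * e - s) * X ^ (1 + 4 * e))]
    · simp
    · refine lt_of_le_of_lt (natDegree_mul_le.trans (Nat.add_le_add (hYd _) (hXd _))) ?_
      omega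
  have hsmall0 : ∀ s, s + 2 ≤ 4 * e → (M * T (q - 1 - s)).coeff (q + 1) = 0 := by
    intro s hs
    rw [hsmall s (by omega), coeff_X_pow_mul', if_neg (by omega)]
  have hsmall4 : (M * T (q - 1 - 4 * e)).coeff (q + 1) = c ^ (4 * e) := by
    rw [hsmall _ le_rfl, Nat.sub_self, pow_zero, one_mul, coeff_X_add_C_pow]
    have : ((4 : ℕ) : F) = 0 := by
      rw [show (4 : ℕ) = 2 * 2 by norm_num, Nat.cast_mul, Nat.cast_ofNat, CharTwo.two_eq_zero,
        zero_mul]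
    simp only [Nat.choose_one_right, Nat.cast_add, Nat.cast_mul, this]
    simp
  have hbig : ∀ s, 8 * e ≤ s → s < q - 1 → (M * T (q - 1 - s)).coeff (q + 1) = 0 := by
    intro s hs hs'
    apply coeff_eq_zero_of_natDegree_lt
    refine lt_of_le_of_lt (natDegree_mul_le.trans (Nat.add_le_add hMd (hTd' _))) ?_
    omega
  have hMG : (M * G).coeff (q + 1) = 0 := by rw [hG0]; simp
  have hr0 : r 0 = e := by simp only [hr]; rw [pow_zero, mul_one, Nat.mod_eq_of_lt (by omega)]
  have hr1 : r 1 = 2 * e := by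
    simp only [hr]; rw [pow_one, Nat.mod_eq_of_lt (by omega), mul_comm]
  have hr2 : r 2 = 4 * e := by
    simp only [hr]; rw [Nat.mod_eq_of_lt (by omega)]; ring
  have : (M * G).coeff (q + 1) = k ^ 4 * c ^ (4 * e) := by
    have e2 : M * G = ∑ i ∈ Finset.range m, C (k ^ 2 ^ i) * (M * T (q - 1 - r i)) - C ε * M := by
      rw [hG, mul_sub, Finset.mul_sum, mul_comm M (C ε)]
      congr 1
      exact Finset.sum_congr rfl fun i _ => by ring
    rw [e2, coeff_sub, coeff_C_mul, coeff_eq_zero_of_natDegree_lt (lt_of_le_of_lt hMd (by omega)),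
      mul_zero, sub_zero, finsetSum_coeff]
    simp only [coeff_C_mul]
    rw [Finset.sum_eq_single_of_mem 2 (Finset.mem_range.2 (by omega))]
    · rw [hr2, hsmall4]; norm_num
    · intro i hi hi2
      rcases Nat.lt_or_ge i 3 with h | h
      · have : i = 0 ∨ i = 1 := by omega
        rcases this with rfl | rfl
        · rw [hr0, hsmall0 _ (by omega), mul_zero]
        · rw [hr1, hsmall0 _ (by omega), mul_zero]
      · rw [hbig _ (hres i h (Finset.mem_range.1 hi)) (hrlt i), mul_zero]
  rw [hMG] at this
  exact mul_ne_zero (pow_ne_zero _ hk) (pow_ne_zero _ hc) this.symm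

theorem aux_lin {F : Type*} [Field F] [Fintype F] [CharP F 2] (m : ℕ)
    (hF : Fintype.card F = 2 ^ m) (c ε : F) (hc : c ≠ 0) (e : ℕ) (he : 0 < e)
    (hb : (3 * e + 1) ^ 4 ≤ 2 ^ m) (k : F) (hk : k ≠ 0)
    (H : ∀ u : F, ∑ i ∈ Finset.range m, (k * (u⁻¹ ^ e + (u + c)⁻¹ ^ e)) ^ 2 ^ i = ε) : False := by
  induction e using Nat.strong_induction_on generalizing k with
  | _ e ih =>
    rcases Nat.even_or_odd e with h | h
    · obtain ⟨e', he'⟩ := even_iff_two_dvd.1 h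
      obtain ⟨k', hk'⟩ : ∃ k' : F, k' ^ 2 = k := by
        refine ⟨k ^ 2 ^ (m - 1), ?_⟩
        have hm : m ≠ 0 := by
          rintro rfl
          have := Nat.pow_le_pow_left (show 4 ≤ 3 * e + 1 by omega) 4
          omega
        rw [← pow_mul, ← pow_succ, Nat.sub_add_cancel (by omega), ← hF, FiniteField.pow_card]
      refine ih e' (by omega) (by omega) (le_trans (Nat.pow_le_pow_left (by omega) 4) hb) k' ?_ ?_
      · rintro rfl; apply hk; rw [← hk']; simp
      · intro u
        rw [← H u]
        have hz : ∀ z : F, ∑ i ∈ Finset.range m, z ^ 2 ^ i = ∑ i ∈ Finset.range m, (z ^ 2) ^ 2 ^ i := by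
          intro z
          have h1 := Finset.sum_range_succ (fun i => z ^ 2 ^ i) m
          rw [Finset.sum_range_succ'] at h1
          have h2 : z ^ 2 ^ m = z := by rw [← hF, FiniteField.pow_card]
          simp only [h2, pow_zero, pow_one, add_left_inj] at h1
          rw [← h1]
          refine Finset.sum_congr rfl fun i _ => ?_
          rw [← pow_mul, pow_succ, mul_comm]
        rw [hz]
        refine Finset.sum_congr rfl fun i _ => ?_
        congr 1
        rw [mul_pow, hk', he', CharTwo.add_sq, pow_mul', pow_mul']
    · exact aux_lin_odd m hF e h hb k c ε hk hc H

open Polynomial in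
theorem aux_dep_all {F : Type*} [Field F] [Fintype F] [CharP F 2] (m : ℕ)
    (hF : Fintype.card F = 2 ^ m) (Q : F[X]) (e t : ℕ) (he : 0 < e) (ht : Q.natDegree = t)
    (htodd : Odd t) (hb : (3 * (e * t) + 1) ^ 4 ≤ 2 ^ m) (b c d ε : F)
    (hb0 : b ≠ 0) (hc : c ≠ 0)
    (H : ∀ u v : F, ∑ i ∈ Finset.range m, (Q.eval (v * u⁻¹ ^ e) + Q.eval ((v + b) * u⁻¹ ^ e)
      + Q.eval ((v + d) * (u + c)⁻¹ ^ e) + Q.eval ((v + (b + d)) * (u + c)⁻¹ ^ e)) ^ 2 ^ i = ε) :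
    False := by
  by_cases ht1 : t = 1
  · subst ht1
    have hQ1 : Q.coeff 1 ≠ 0 := by
      intro h0
      have : Q = 0 := leadingCoeff_eq_zero.1 (by rw [leadingCoeff, ht]; exact h0)
      rw [this] at ht; simp at ht
    have hQe : ∀ z, Q.eval z = Q.coeff 0 + Q.coeff 1 * z := by
      intro z
      rw [eval_eq_sum_range, ht]
      simp [Finset.sum_range_succ]
    rw [mul_one] at hb
    refine aux_lin m hF c ε hc e he hb (Q.coeff 1 * b) (mul_ne_zero hQ1 hb0) fun u => ?_
    rw [← H u 0]
    refine Finset.sum_congr rfl fun i _ => ?_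
    congr 1
    simp only [hQe]
    have h2 : (2 : F) = 0 := CharTwo.two_eq_zero
    linear_combination (-2 * Q.coeff 0 - Q.coeff 1 * d * (u + c)⁻¹ ^ e) * h2
  · exact aux_dep m hF Q e t he ht htodd ht1 hb b c d ε hb0 hc H

open Polynomial in
theorem aux_all {F : Type*} [Field F] [Fintype F] [CharP F 2] (m : ℕ)
    (hF : Fintype.card F = 2 ^ m) (Q : F[X]) (e t : ℕ) (he : 0 < e) (ht : Q.natDegree = t)
    (htodd : Odd t) (hb : (3 * (e * t) + 1) ^ 4 ≤ 2 ^ m) (a b c d ε : F)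
    (hD : a * d + b * c ≠ 0)
    (H : ∀ u v : F, ∑ i ∈ Finset.range m, (Q.eval (v * u⁻¹ ^ e) + Q.eval ((v + b) * (u + a)⁻¹ ^ e)
      + Q.eval ((v + d) * (u + c)⁻¹ ^ e) + Q.eval ((v + (b + d)) * (u + (a + c))⁻¹ ^ e)) ^ 2 ^ i = ε) :
    False := by
  by_cases ha : a = 0
  · subst ha
    simp only [zero_mul, zero_add] at hD
    refine aux_dep_all m hF Q e t he ht htodd hb b c d ε (left_ne_zero_of_mul hD)
      (right_ne_zero_of_mul hD) fun u v => ?_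
    rw [← H u v]; simp only [add_zero, zero_add]
  by_cases hc : c = 0
  · subst hc
    simp only [mul_zero, add_zero] at hD
    refine aux_dep_all m hF Q e t he ht htodd hb d a b ε (right_ne_zero_of_mul hD)
      ha fun u v => ?_
    rw [← H u v]
    refine Finset.sum_congr rfl fun i _ => ?_
    simp only [add_zero]
    rw [add_comm d b]
    congr 1
    ring
  by_cases hac : a + c = 0
  · have hca : c = a := ((CharTwo.add_eq_zero).1 hac).symm
    subst hca
    have hbd : b + d ≠ 0 := by
      intro h; apply hD; linear_combination c * h
    refine aux_dep_all m hF Q e t he ht htodd hb (b + d) c d ε hbd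
      ha fun u v => ?_
    rw [← H u v]
    refine Finset.sum_congr rfl fun i _ => ?_
    rw [hac, add_zero, add_assoc b d d, CharTwo.add_self_eq_zero, add_zero]
    congr 1
    ring
  exact aux_indep m hF Q e t he ht htodd hb a b c d ε ha hc hac H

theorem aux_bound (m e t : ℕ) (hdeg : (3 * e * t : ℝ) ≤ 2 ^ ((m : ℝ) / 4) - 1) :
    (3 * (e * t) + 1) ^ 4 ≤ 2 ^ m := by
  have h1 : ((3 * (e * t) + 1 : ℕ) : ℝ) ≤ 2 ^ ((m : ℝ) / 4) := by push_cast; linarith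
  have h2 := pow_le_pow_left₀ (Nat.cast_nonneg _) h1 4
  rw [← Real.rpow_natCast (2 ^ ((m : ℝ) / 4)) 4, ← Real.rpow_mul (by norm_num)] at h2
  rw [show (m : ℝ) / 4 * ((4 : ℕ) : ℝ) = (m : ℝ) by push_cast; ring, Real.rpow_natCast] at h2
  exact_mod_cast h2

theorem gPSap_second_derivative_nonconstant
    (m : ℕ) (hm : 4 < m) (e : ℕ) (he : 0 < e) (hgcd : Nat.gcd e (2 ^ m - 1) = 1)
    (Q : Polynomial (GaloisField 2 m)) (t : ℕ) (ht : Q.natDegree = t) (htodd : Odd t)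
    (hQperm : Function.Bijective fun x => Q.eval x)
    (hdeg : (3 * e * t : ℝ) ≤ 2 ^ ((m : ℝ) / 4) - 1)
    (a b c d : GaloisField 2 m) (habcd : a * d + b * c ≠ 0)
    (f : GaloisField 2 m × GaloisField 2 m → ZMod 2)
    (hf : ∀ x y, f (x, y) = Tr m (Q.eval ((b * x + d * y) * ((a * x + c * y)⁻¹) ^ e))) :
    ¬ ∃ ε : ZMod 2, ∀ p : GaloisField 2 m × GaloisField 2 m,
        D2 f (1, 0) (0, 1) p = ε := by
  rintro ⟨ε, hε⟩
  let _ : Fintype (GaloisField 2 m) := Fintype.ofFinite _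
  have hF : Fintype.card (GaloisField 2 m) = 2 ^ m := by
    rw [← Nat.card_eq_fintype_card]; exact GaloisField.card 2 m (by omega)
  have hTr : ∀ z : GaloisField 2 m, algebraMap (ZMod 2) (GaloisField 2 m) (Tr m z) =
      ∑ i ∈ Finset.range m, z ^ 2 ^ i := by
    intro z
    rw [Tr, FiniteField.algebraMap_trace_eq_sum_pow, GaloisField.finrank 2 (by omega)]
    simp
  refine aux_all m hF Q e t he ht htodd (aux_bound m e t hdeg) a b c d
    (algebraMap (ZMod 2) (GaloisField 2 m) ε) habcd fun u v => ?_
  obtain ⟨x, y, hu, hv⟩ : ∃ x y, a * x + c * y = u ∧ b * x + d * y = v := by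
    have h2 : (2 : GaloisField 2 m) = 0 := CharTwo.two_eq_zero
    have hw := mul_inv_cancel₀ habcd
    generalize (a * d + b * c)⁻¹ = w at hw
    refine ⟨(d * u + c * v) * w, (b * u + a * v) * w, ?_, ?_⟩
    · linear_combination (a * c * v * w) * h2 + u * hw
    · linear_combination (b * d * u * w) * h2 + v * hw
  have h := hε (x, y)
  simp only [D2, Prod.mk_add_mk, add_zero, hf] at h
  rw [← h, map_add, map_add, map_add, hTr, hTr, hTr, hTr, aux_S_add, aux_S_add, aux_S_add]
  have e1 : a * (x + 1) + c * y = u + a := by rw [← hu]; ring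
  have e2 : b * (x + 1) + d * y = v + b := by rw [← hv]; ring
  have e3 : a * x + c * (y + 1) = u + c := by rw [← hu]; ring
  have e4 : b * x + d * (y + 1) = v + d := by rw [← hv]; ring
  have e5 : a * (x + 1) + c * (y + 1) = u + (a + c) := by rw [← hu]; ring
  have e6 : b * (x + 1) + d * (y + 1) = v + (b + d) := by rw [← hv]; ring
  rw [e1, e2, e3, e4, e5, e6, hu, hv]
end

section
/- Let m ≥ 1, let ℓ be an integer with 0 ≤ ℓ ≤ m, let e be a positive integer, let Q : F_{2^m} → F_{2^m} be any function, let a, b, c, d ∈ F_{2^m} with ad + bc ≠ 0, and let ε ∈ F_2. Define f*, f̂ : F_{2^m} × F_{2^m} → F_2 by f*(x,y) = Tr_1^m(Q(y^{2^{m−ℓ}} · ((x^{2^{m−ℓ}})⁻¹)^e)) and f̂(x,y) = Tr_1^m(Q((b^{2^{m−ℓ}} x + d^{2^{m−ℓ}} y) · ((a^{2^{m−ℓ}} x + c^{2^{m−ℓ}} y)⁻¹)^e)). Then D_{(a,b)} D_{(c,d)} f*(x,y) = ε for all (x,y) ∈ F_{2^m} × F_{2^m} if and only if D_{(1,0)}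 D_{(0,1)} f̂(x,y) = ε for all (x,y) ∈ F_{2^m} × F_{2^m}. -/
/-- Lemma 4.5: `D_{(a,b)} D_{(c,d)}` of `f*(x,y) = Tr(Q(y^{2^{m-ℓ}} (x^{2^{m-ℓ}})^{-e}))`
is constantly `ε` if and only if `D_{(1,0)} D_{(0,1)}` of
`f̂(x,y) = Tr(Q((b^{2^{m-ℓ}}x + d^{2^{m-ℓ}}y)(a^{2^{m-ℓ}}x + c^{2^{m-ℓ}}y)^{-e}))`
is constantly `ε`. -/
theorem gPSap_derivative_change_of_variables
    (m : ℕ) (hm : 1 ≤ m) (ℓ : ℕ) (hℓ : ℓ ≤ m) (e : ℕ) (he : 0 < e)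
    (Q : GaloisField 2 m → GaloisField 2 m)
    (a b c d : GaloisField 2 m) (habcd : a * d + b * c ≠ 0) (ε : ZMod 2)
    (fstar fhat : GaloisField 2 m × GaloisField 2 m → ZMod 2)
    (hfstar : ∀ x y, fstar (x, y) =
      Tr m (Q (y ^ 2 ^ (m - ℓ) * (((x ^ 2 ^ (m - ℓ))⁻¹) ^ e))))
    (hfhat : ∀ x y, fhat (x, y) =
      Tr m (Q ((b ^ 2 ^ (m - ℓ) * x + d ^ 2 ^ (m - ℓ) * y) *
        (((a ^ 2 ^ (m - ℓ) * x + c ^ 2 ^ (m - ℓ) * y)⁻¹) ^ e)))) :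
    (∀ p : GaloisField 2 m × GaloisField 2 m, D2 fstar (a, b) (c, d) p = ε) ↔
    (∀ p : GaloisField 2 m × GaloisField 2 m, D2 fhat (1, 0) (0, 1) p = ε) := by
  have key : ∀ u v, fhat (u ^ 2 ^ (m - ℓ), v ^ 2 ^ (m - ℓ)) =
      fstar (a * u + c * v, b * u + d * v) := by
    intro u v
    rw [hfhat, hfstar, add_pow_char_pow, add_pow_char_pow, mul_pow, mul_pow, mul_pow, mul_pow]
  have hD : ∀ u v, D2 fhat (1, 0) (0, 1) (u ^ 2 ^ (m - ℓ), v ^ 2 ^ (m - ℓ)) =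
      D2 fstar (a, b) (c, d) (a * u + c * v, b * u + d * v) := by
    intro u v
    have h1 := key u v
    have h2 := key (u + 1) v
    have h3 := key u (v + 1)
    have h4 := key (u + 1) (v + 1)
    simp only [add_pow_char_pow, one_pow] at h2 h3 h4
    simp only [D2, Prod.mk_add_mk, add_zero]
    rw [h1, h2, h3, h4]
    congr 1
    · congr 1
      · congr 3 <;> ring
      · congr 2 <;> ring
    · congr 2 <;> ring
  have hs : ∀ x : GaloisField 2 m, ∃ u, u ^ 2 ^ (m - ℓ) = x := by
    intro x
    have : Function.Surjective (iterateFrobenius (GaloisField 2 m) 2 (m - ℓ)) :=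
      Finite.surjective_of_injective (iterateFrobenius (GaloisField 2 m) 2 (m - ℓ)).injective
    obtain ⟨u, hu⟩ := this x
    exact ⟨u, by rw [← hu, iterateFrobenius_def]⟩
  constructor
  · rintro h ⟨x, y⟩
    obtain ⟨u, rfl⟩ := hs x
    obtain ⟨v, rfl⟩ := hs y
    rw [hD]
    exact h _
  · rintro h ⟨x, y⟩
    have h2 : (2 : GaloisField 2 m) = 0 := CharTwo.two_eq_zero
    have e1 : a * ((d * x + c * y) / (a * d + b * c)) + c * ((b * x + a * y) / (a * d + b * c)) = x := by
      rw [← mul_div_assoc, ← mul_div_assoc, ← add_div, div_eq_iff habcd]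
      linear_combination (a * c * y) * h2
    have e2 : b * ((d * x + c * y) / (a * d + b * c)) + d * ((b * x + a * y) / (a * d + b * c)) = y := by
      rw [← mul_div_assoc, ← mul_div_assoc, ← add_div, div_eq_iff habcd]
      linear_combination (b * d * x) * h2
    have := hD ((d * x + c * y) / (a * d + b * c)) ((b * x + a * y) / (a * d + b * c))
    rw [e1, e2] at this
    rw [← this]
    exact h _
end

section
/- Let m ≥ 4 and let e be an odd positive integer with gcd(e, 2^m − 1) = 1 and 4e ≤ 2^{m/4} − 1 (an inequality of real numbers). Define f̃ : F_{2^m} × F_{2^m} → F_2 by f̃(x,y) = Tr_1^m(y · (x⁻¹)^e). Then for all linearly independent u = (a,b) and v = (c,d) in F_{2^m} × F_{2^m}: (i) D_u D_v f̃(x,y) = 0 for all (x,y) if and only if a = 0 and c = 0; and (ii) D_u D_v f̃ is not identically equal to 1. -/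
lemma nt_core {m e i N : ℕ} (heodd : Odd e) (he2 : e < 2^m-1) (hi : i < m)
    (hN : N * e < 2^m-1) (hN' : N < 2^m-1) (h : e*2^i ≡ N [MOD (2^m-1)]) : e*2^i = N := by
  by_cases hc : e*2^i < 2^m-1
  · exact Nat.ModEq.eq_of_lt_of_lt h hc hN'
  exfalso
  obtain ⟨j, rfl⟩ : ∃ j, m = i + j := ⟨m-i, by omega⟩
  have hp : 0 < 2^(i+j) := by positivity
  have hj : 2^j ≤ e := by
    by_contra hlt
    push Not at hlt hc
    have h1 : (e+1)*2^i ≤ 2^j*2^i := Nat.mul_le_mul_right _ hlt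
    have h2 : 2^j*2^i = 2^(i+j) := by rw [pow_add]; ring
    have h3 : 2^i ≤ 1 := by
      rw [h2] at h1
      rw [add_mul] at h1
      omega
    have h4 : 2^i = 1 := le_antisymm h3 Nat.one_le_two_pow
    rw [h4] at hc
    omega
  have h1 : N*2^j ≡ e [MOD (2^(i+j)-1)] := by
    have h2 : e*2^i*2^j ≡ N*2^j [MOD (2^(i+j)-1)] := h.mul_right _
    have h3 : 2^(i+j) ≡ 1 [MOD (2^(i+j)-1)] := by
      have := (Nat.modEq_sub (show 1 ≤ 2^(i+j) from hp)) 
      exact this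
    have h4 : e*2^i*2^j ≡ e [MOD (2^(i+j)-1)] := by
      have := h3.mul_left e
      rw [mul_one] at this
      rw [mul_assoc, ← pow_add]
      exact this
    exact h2.symm.trans h4
  have h5 : N*2^j = e := Nat.ModEq.eq_of_lt_of_lt h1
    (lt_of_le_of_lt (Nat.mul_le_mul_left _ hj) hN) he2
  obtain ⟨j', rfl⟩ : ∃ j', j = j'+1 := ⟨j-1, by omega⟩
  rw [pow_succ, ← mul_assoc] at h5
  obtain ⟨r, hr⟩ := heodd
  omega

lemma nt_two {e i t k : ℕ} (heodd : Odd e) (he1 : 1 < e) (hk : k < e) (het : e*e ≤ 2^t)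
   (h : e*2^i = k + 2^t) : False := by
  rcases le_or_gt t i with hti | hti
  · obtain ⟨s, rfl⟩ := Nat.exists_eq_add_of_le hti
    rw [pow_add] at h
    have h1 : 1 ≤ 2^s := Nat.one_le_two_pow
    have h2 : e * 2^t ≤ e*(2^t*2^s) := by
      apply Nat.mul_le_mul_left; nlinarith
    nlinarith
  · obtain ⟨s, rfl⟩ : ∃ s, t = i + (s+1) := ⟨t-i-1, by omega⟩
    rcases Nat.eq_zero_or_pos k with rfl | hk0
    · rw [pow_add, mul_comm, zero_add] at h
      have := Nat.eq_of_mul_eq_mul_left (by positivity) h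
      rw [pow_succ] at this
      obtain ⟨r, hr⟩ := heodd
      omega
    · have hd : 2^i ∣ k := by
        have : 2^i ∣ k + 2^(i+(s+1)) := h ▸ Dvd.intro_left _ rfl
        exact (Nat.dvd_add_left (pow_dvd_pow _ (by omega))).1 this
      have := Nat.le_of_dvd hk0 hd
      nlinarith

lemma bnd {m e : ℕ} (hbound : (4 * e : ℝ) ≤ 2 ^ ((m : ℝ) / 4) - 1) : (4*e+1)^4 ≤ 2^m := by
  have h : ((4*e+1 : ℝ))^4 ≤ (2 ^ ((m : ℝ) / 4))^4 := by
    apply pow_le_pow_left₀ (by positivity); linarith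
  rw [← Real.rpow_natCast, ← Real.rpow_natCast, ← Real.rpow_mul (by norm_num)] at h
  have : (m:ℝ)/4*((4:ℕ):ℝ) = m := by push_cast; ring
  rw [this, Real.rpow_natCast, Real.rpow_natCast] at h
  exact_mod_cast h

lemma bnd2 {m e : ℕ} (he1 : 3 ≤ e) (hb : (4*e+1)^4 ≤ 2^m) :
    e*e ≤ 2^(m/2) ∧ (e+2^(m/2))*e < 2^m-1 := by
  have h1 : 2^m ≤ 2*(2^(m/2)*2^(m/2)) := by
    rw [← pow_add, ← pow_succ']; exact Nat.pow_le_pow_right (by norm_num) (by omega)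
  have h2 : (2^(m/2)*2^(m/2)) ≤ 2^m := by
    rw [← pow_add]; exact Nat.pow_le_pow_right (by norm_num) (by omega)
  generalize 2^(m/2) = A at *
  generalize 2^m = Q at *
  have hA : e*e ≤ A := by
    by_contra hlt
    push Not at hlt
    have : A*A ≤ (e*e)*(e*e) := Nat.mul_le_mul hlt.le hlt.le
    have h3 : (4*e)^4 ≤ (4*e+1)^4 := Nat.pow_le_pow_left (by omega) _
    have h4 : (4*e)^4 = 256*((e*e)*(e*e)) := by ring
    have : 0 < (e*e)*(e*e) := by positivity
    omega
  refine ⟨hA, ?_⟩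
  have : 2*e+3 ≤ A := by nlinarith
  have : (e+A)*e + 2 ≤ A*A := by nlinarith
  omega

lemma sum_inv_pow {K : Type*} [Field K] [Fintype K] [CharP K 2] {m : ℕ} (hm : 2 ≤ m)
    (hcard : Fintype.card K = 2^m) {n : ℕ} (hn : 0 < n) (k : ℕ) :
    ∑ x : K, (x⁻¹)^n * x^k = if n ≡ k [MOD (2^m-1)] then 1 else 0 := by
  classical
  have hq : 4 ≤ 2^m := by
    calc 4 = 2^2 := rfl
      _ ≤ 2^m := Nat.pow_le_pow_right (by norm_num) hm
  have h1 : ∑ x : K, (x⁻¹)^n * x^k = ∑ x : Kˣ, (x:K)^((2^m-2)*n+k) := by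
    have h2 : ∑ x : K, (x⁻¹)^n * x^k = ∑ x : {x : K // x ≠ 0}, ((x:K)⁻¹)^n * (x:K)^k := by
      rw [← Finset.sum_subtype (Finset.univ.filter (fun x : K => x ≠ 0)) (by simp)
        (fun x => (x⁻¹)^n * x^k), Finset.sum_filter_of_ne]
      intro x _ hx h0
      apply hx
      simp [h0, hn.ne']
    rw [h2]
    refine (Fintype.sum_equiv unitsEquivNeZero _ _ ?_).symm
    intro x
    have hx : (x:K) ≠ 0 := x.ne_zero
    have hx1 : (x:K)^(2^m-1) = 1 := by
      rw [← hcard]; exact FiniteField.pow_card_sub_one_eq_one _ hx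
    have hx2 : (x:K)⁻¹ = (x:K)^(2^m-2) := by
      symm
      apply eq_inv_of_mul_eq_one_left
      rw [← pow_succ, ← hx1]
      congr 1; omega
    change _ = (x:K)⁻¹^n * (x:K)^k
    rw [hx2, pow_add, pow_mul]
  rw [h1, FiniteField.sum_pow_units, hcard, CharTwo.neg_eq]
  have : (2^m-1 ∣ (2^m-2)*n+k) ↔ n ≡ k [MOD (2^m-1)] := by
    obtain ⟨r, hr⟩ : ∃ r, 2^m = r+2 := ⟨2^m-2, by omega⟩
    rw [hr]
    simp only [Nat.add_sub_cancel, show r + 2 - 1 = r+1 by omega]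
    have h0 : r * n + n ≡ 0 [MOD (r+1)] := by
      rw [Nat.modEq_zero_iff_dvd]; exact ⟨n, by ring⟩
    rw [← Nat.modEq_zero_iff_dvd]
    constructor
    · intro h
      exact (Nat.ModEq.add_left_cancel' (r*n) (h.trans h0.symm)).symm
    · intro h
      exact ((h.symm).add_left (r*n)).trans h0
  simp only [this]

/-- coefficient function -/
def cf {K : Type*} [Field K] (m e : ℕ) (d : K) (k : ℕ) : K :=
  ∑ i ∈ Finset.range m, if e*2^i ≡ k [MOD (2^m-1)] then d^(2^i) else 0

/-- trace monomial -/
def ph {K : Type*} [Field K] (m e : ℕ) (d : K) (x : K) : K :=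
  ∑ i ∈ Finset.range m, (d * (x⁻¹)^e)^(2^i)

lemma sum_ph {K : Type*} [Field K] [Fintype K] [CharP K 2] {m e : ℕ} (hm : 2 ≤ m) (he : 0 < e)
    (hcard : Fintype.card K = 2^m) (d : K) (k : ℕ) :
    ∑ x : K, ph m e d x * x^k = cf m e d k := by
  unfold ph cf
  simp only [Finset.sum_mul]
  rw [Finset.sum_comm]
  refine Finset.sum_congr rfl fun i _ => ?_
  have := sum_inv_pow (K := K) hm hcard (n := e*2^i) (by positivity) k
  simp only [mul_pow, ← pow_mul, mul_assoc]
  rw [← Finset.mul_sum, this]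
  simp

lemma key_sum {K : Type*} [Field K] [Fintype K] [CharP K 2] {m e : ℕ}
    (hcard : Fintype.card K = 2^m) (d κ : K) (h : ∀ x, ph m e d x + ph m e d (x+1) = κ)
    {J : ℕ} (hJ : J < 2^m-1) :
    ∑ x : K, ph m e d x * ((x+1)^J + x^J) = 0 := by
  have h1 : ∑ x : K, (ph m e d x + ph m e d (x+1)) * x^J = 0 := by
    simp only [h]
    rw [← Finset.mul_sum, FiniteField.sum_pow_lt_card_sub_one K _ (by rwa [hcard]), mul_zero]
  simp only [add_mul, mul_add, Finset.sum_add_distrib] at h1 ⊢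
  have h2 : ∑ x : K, ph m e d (x+1) * x^J = ∑ x : K, ph m e d x * (x+1)^J := by
    refine Fintype.sum_equiv (Equiv.addRight 1) _ _ fun x => ?_
    simp [add_assoc, CharTwo.add_self_eq_zero]
  rw [h2, add_comm] at h1
  exact h1

lemma case_one {K : Type*} [Field K] [Fintype K] [CharP K 2] {m : ℕ} (hm : 4 ≤ m)
    (hcard : Fintype.card K = 2^m) (d κ : K) (h : ∀ x, ph m 1 d x + ph m 1 d (x+1) = κ) :
    d = 0 := by
  have hq : 16 ≤ 2^m := by
    calc 16 = 2^4 := rfl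
      _ ≤ 2^m := Nat.pow_le_pow_right (by norm_num) hm
  have hcf : ∀ k < 7, cf m 1 d k = ∑ i ∈ Finset.range m, if 2^i = k then d^(2^i) else 0 := by
    intro k hk
    refine Finset.sum_congr rfl fun i hi => ?_
    have hi' := Finset.mem_range.1 hi
    have : 2^i * 2 ≤ 2^m := by
      rw [← pow_succ]; exact Nat.pow_le_pow_right (by norm_num) hi'
    have : (1*2^i ≡ k [MOD (2^m-1)]) ↔ 2^i = k := by
      rw [one_mul]
      constructor
      · intro h; exact Nat.ModEq.eq_of_lt_of_lt h (by omega) (by omega)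
      · rintro rfl; rfl
    simp only [this]
  have hz : ∀ k < 7, (∀ i, 2^i ≠ k) → cf m 1 d k = 0 := by
    intro k hk hi
    rw [hcf k hk]
    simp [hi]
  have hnz : ∀ j < 3, cf m 1 d (2^j) = d^(2^j) := by
    intro j hj
    rw [hcf _ (by interval_cases j <;> norm_num)]
    rw [Finset.sum_eq_single j]
    · simp
    · intro i _ hij
      rw [if_neg]
      intro h; exact hij (Nat.pow_right_injective le_rfl h)
    · intro h; simp at h; omega
  have pw : ∀ i k : ℕ, 2^i = k → i < k := fun i k h => h ▸ Nat.lt_two_pow_self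
  have no : ∀ k ∈ ({0,3,5,6} : Finset ℕ), ∀ i, 2^i ≠ k := by
    intro k hk i h
    have := pw i k h
    simp only [Finset.mem_insert, Finset.mem_singleton] at hk
    rcases hk with rfl | rfl | rfl | rfl <;> interval_cases i <;> simp at h
  have h0 := hz 0 (by norm_num) (no 0 (by simp))
  have h3 := hz 3 (by norm_num) (no 3 (by simp))
  have h5 := hz 5 (by norm_num) (no 5 (by simp))
  have h6 := hz 6 (by norm_num) (no 6 (by simp))
  have h1 : cf m 1 d 1 = d := by simpa using hnz 0 (by norm_num)
  have h2 : cf m 1 d 2 = d^2 := by simpa using hnz 1 (by norm_num)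
  have h4 : cf m 1 d 4 = d^4 := by simpa using hnz 2 (by norm_num)
  have two : (2:K) = 0 := CharTwo.two_eq_zero
  have s3 := key_sum hcard d κ h (J := 3) (by omega)
  have s7 := key_sum hcard d κ h (J := 7) (by omega)
  have e3 : ∀ x : K, (x+1)^3 + x^3 = x^0 + x^1 + x^2 := by
    intro x; linear_combination (x^3 + x^2+x)*two
  have e7 : ∀ x : K, (x+1)^7 + x^7 = x^0 + x^1 + x^2 + x^3+x^4+x^5+x^6 := by
    intro x; linear_combination (x^7+3*x^6+10*x^5+17*x^4+17*x^3+10*x^2+3*x)*two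
  simp only [e3, e7, mul_add, Finset.sum_add_distrib,
    sum_ph (show 2 ≤ m by omega) one_pos hcard, h0,h1,h2,h3,h4,h5,h6] at s3 s7
  have : d^4 = 0 := by linear_combination s7 - s3
  exact pow_eq_zero_iff (by norm_num) |>.1 this

lemma case_big {K : Type*} [Field K] [Fintype K] [CharP K 2] {m e : ℕ} (hm : 4 ≤ m)
    (he : 3 ≤ e) (heodd : Odd e) (hgcd : Nat.gcd e (2 ^ m - 1) = 1) (hb : (4*e+1)^4 ≤ 2^m)
    (hcard : Fintype.card K = 2^m) (d κ : K) (h : ∀ x, ph m e d x + ph m e d (x+1) = κ) :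
    d = 0 := by
  obtain ⟨b1, b2⟩ := bnd2 he hb
  set T := 2^(m/2) with hT
  have b3 : e + T < 2^m-1 := by nlinarith
  have c0 : ∀ k < e, cf m e d k = 0 := by
    intro k hk
    refine Finset.sum_eq_zero fun i hi => if_neg fun hmod => ?_
    have := nt_core heodd (by omega) (Finset.mem_range.1 hi) (by nlinarith) (by omega) hmod
    have : 1 ≤ 2^i := Nat.one_le_two_pow
    nlinarith
  have c1 : ∀ k < e, cf m e d (k+T) = 0 := by
    intro k hk
    refine Finset.sum_eq_zero fun i hi => if_neg fun hmod => ?_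
    have := nt_core heodd (by omega) (Finset.mem_range.1 hi) (by nlinarith) (by omega) hmod
    exact nt_two heodd (by omega) hk b1 this
  have ce : cf m e d e = d := by
    unfold cf
    rw [Finset.sum_eq_single 0]
    · simp [Nat.ModEq]
    · intro i hi hi0
      refine if_neg fun hmod => hi0 ?_
      have hi' := Finset.mem_range.1 hi
      have : 2^i * 2 ≤ 2^m := by
        rw [← pow_succ]; exact Nat.pow_le_pow_right (by norm_num) hi'
      have h1 : 2^i ≡ 1 [MOD (2^m-1)] := by
        apply Nat.ModEq.cancel_left_of_coprime (c := e) (by rw [Nat.gcd_comm]; exact hgcd)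
        simpa using hmod
      have h2 := Nat.ModEq.eq_of_lt_of_lt h1 (by omega) (by omega)
      simpa using h2
    · intro h; simp at h; omega
  have s := key_sum hcard d κ h b3
  have ex : ∀ x : K, (x+1)^(e+T) + x^(e+T) =
      (∑ k ∈ Finset.range e, (e.choose k : K) * x^k) + x^e +
      ∑ k ∈ Finset.range e, (e.choose k : K) * x^(k+T) := by
    intro x
    have hx : (x+1)^e = (∑ k ∈ Finset.range e, (e.choose k : K) * x^k) + x^e := by
      rw [add_pow, Finset.sum_range_succ]
      simp [mul_comm]
    have hx2 : (x+1)^T = x^T + 1 := by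
      rw [hT, add_pow_char_pow, one_pow]
    have two : (2:K) = 0 := CharTwo.two_eq_zero
    simp only [pow_add x _ T, ← mul_assoc]
    rw [← Finset.sum_mul, pow_add, hx, hx2]
    linear_combination x^e * x^T * two
  simp only [ex, mul_add, Finset.mul_sum, Finset.sum_add_distrib] at s
  rw [Finset.sum_comm, Finset.sum_comm (s := Finset.univ) (t := Finset.range e)] at s
  have st : ∀ (z : K) (k : ℕ), ∑ x : K, ph m e d x * (z * x^k) = z * cf m e d k := by
    intro z k
    rw [← sum_ph (show 2 ≤ m by omega) (show 0 < e by omega) hcard, Finset.mul_sum]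
    exact Finset.sum_congr rfl fun x _ => mul_left_comm _ _ _
  simp only [st] at s
  rw [sum_ph (show 2 ≤ m by omega) (show 0 < e by omega) hcard, Finset.sum_eq_zero,
    Finset.sum_eq_zero, ce] at s
  · simpa using s
  · intro k hk; rw [c1 k (Finset.mem_range.1 hk), mul_zero]
  · intro k hk; rw [c0 k (Finset.mem_range.1 hk), mul_zero]

lemma case_all {K : Type*} [Field K] [Fintype K] [CharP K 2] {m e : ℕ} (hm : 4 ≤ m)
    (heodd : Odd e) (hgcd : Nat.gcd e (2 ^ m - 1) = 1) (hb : (4*e+1)^4 ≤ 2^m)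
    (hcard : Fintype.card K = 2^m) (d κ : K) (h : ∀ x, ph m e d x + ph m e d (x+1) = κ) :
    d = 0 := by
  obtain ⟨r, hr⟩ := id heodd
  rcases Nat.eq_zero_or_pos r with rfl | hr0
  · obtain rfl : e = 1 := by omega
    exact case_one hm hcard d κ h
  · exact case_big hm (by omega) heodd hgcd hb hcard d κ h

open Polynomial in
lemma case_poly {K : Type*} [Field K] [Fintype K] [CharP K 2] {m e : ℕ} (he : 0 < e)
    (hb : (4*e+1)^4 ≤ 2^m) (hcard : Fintype.card K = 2^m) {a c : K} (ha : a ≠ 0) (hc : c ≠ 0)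
    (hac : a + c ≠ 0)
    (h : ∀ x : K, (x⁻¹)^e + ((x+a)⁻¹)^e + ((x+c)⁻¹)^e + ((x+a+c)⁻¹)^e = 0) : False := by
  let A : K[X] := X + C a
  let B : K[X] := X + C c
  let D : K[X] := X + C (a+c)
  let P : K[X] := (A*B*D)^e + (X*B*D)^e + (X*A*D)^e + (X*A*B)^e
  have dA : A.natDegree = 1 := natDegree_X_add_C _
  have dB : B.natDegree = 1 := natDegree_X_add_C _
  have dD : D.natDegree = 1 := natDegree_X_add_C _
  have dX : (X : K[X]).natDegree = 1 := natDegree_X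
  have t : ∀ p q r : K[X], p.natDegree = 1 → q.natDegree = 1 → r.natDegree = 1 →
      ((p*q*r)^e).natDegree ≤ 3*e := by
    intro p q r hp hq hr
    refine natDegree_pow_le.trans ?_
    rw [mul_comm]
    apply Nat.mul_le_mul_right
    refine natDegree_mul_le.trans ?_
    have := natDegree_mul_le (p := p) (q := q)
    omega
  have dP : P.natDegree ≤ 3*e := by
    refine natDegree_add_le_of_degree_le (natDegree_add_le_of_degree_le
      (natDegree_add_le_of_degree_le ?_ ?_) ?_) ?_ <;> apply t <;> assumption
  have dQ : (P * (X*A*B*D)).natDegree < Fintype.card K := by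
    have h1 := natDegree_mul_le (p := P) (q := X*A*B*D)
    have h2 := natDegree_mul_le (p := X*A*B) (q := D)
    have h3 := natDegree_mul_le (p := X*A) (q := B)
    have h4 := natDegree_mul_le (p := X) (q := A)
    rw [hcard]
    have : (4*e+1)^1 * 5 ≤ (4*e+1)^4 := by
      have : (4*e+1)^4 = (4*e+1)^1*(4*e+1)^3 := by ring
      rw [this]
      apply Nat.mul_le_mul_left
      calc 5 ≤ 5^3 := by norm_num
        _ ≤ _ := Nat.pow_le_pow_left (by omega) _
    rw [pow_one] at this
    omega
  have hQ : P * (X*A*B*D) = 0 := by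
    refine eq_zero_of_natDegree_lt_card_of_eval_eq_zero _ Function.injective_id ?_ dQ
    intro x
    simp only [id, eval_mul, eval_add, eval_pow, eval_X, eval_C, P, A, B, D]
    by_cases hx : x * (x+a) * (x+c) * (x+(a+c)) = 0
    · rw [hx, mul_zero]
    · have hx1 : x ≠ 0 := by rintro rfl; simp at hx
      have hx2 : x+a ≠ 0 := by intro h; simp [h] at hx
      have hx3 : x+c ≠ 0 := by intro h; simp [h] at hx
      have hx4 : x+(a+c) ≠ 0 := by intro h; simp [h] at hx
      have hh := h x
      rw [add_assoc x a c] at hh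
      apply mul_eq_zero_of_left
      simp only [inv_pow] at hh
      simp only [mul_pow]
      have y1 := pow_ne_zero e hx1
      have y2 := pow_ne_zero e hx2
      have y3 := pow_ne_zero e hx3
      have y4 := pow_ne_zero e hx4
      generalize x^e = z1 at *
      generalize (x+a)^e = z2 at *
      generalize (x+c)^e = z3 at *
      generalize (x+(a+c))^e = z4 at *
      field_simp at hh
      linear_combination hh
  have hn : X*A*B*D ≠ 0 := mul_ne_zero (mul_ne_zero (mul_ne_zero X_ne_zero (X_add_C_ne_zero _))
    (X_add_C_ne_zero _)) (X_add_C_ne_zero _)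
  have hP : P = 0 := (mul_eq_zero.1 hQ).resolve_right hn
  have := congrArg (eval 0) hP
  simp [P, A, B, D, he.ne', ha, hc, hac] at this

lemma Tr_eq_sum {m : ℕ} (hm : m ≠ 0) (x : GaloisField 2 m) :
    algebraMap (ZMod 2) (GaloisField 2 m) (Tr m x) = ∑ i ∈ Finset.range m, x^(2^i) := by
  unfold Tr
  rw [FiniteField.algebraMap_trace_eq_sum_pow, GaloisField.finrank 2 hm, Nat.card_zmod]

lemma Tr_add' {m : ℕ} (x y : GaloisField 2 m) : Tr m (x+y) = Tr m x + Tr m y := map_add _ _ _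

lemma Tr_nondeg {m : ℕ} (z : GaloisField 2 m) (h : ∀ y, Tr m (y*z) = 0) : z = 0 := by
  refine (traceForm_nondegenerate (ZMod 2) (GaloisField 2 m)).1 z fun y => ?_
  rw [Algebra.traceForm_apply, mul_comm]
  exact h y

lemma const_deriv {m : ℕ} (hm : 4 ≤ m) {e : ℕ} (heodd : Odd e)
    (hgcd : Nat.gcd e (2 ^ m - 1) = 1) (hb : (4*e+1)^4 ≤ 2^m) (a d : GaloisField 2 m) (κ : ZMod 2)
    (ha : a ≠ 0) (h : ∀ x, Tr m (d * (x⁻¹)^e) + Tr m (d * ((x+a)⁻¹)^e) = κ) : d = 0 := by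
  haveI : Fintype (GaloisField 2 m) := Fintype.ofFinite _
  have hcard : Fintype.card (GaloisField 2 m) = 2^m := by
    rw [← Nat.card_eq_fintype_card, GaloisField.card 2 m (by omega)]
  have key : d * (a⁻¹)^e = 0 := by
    refine case_all hm heodd hgcd hb hcard _ (algebraMap (ZMod 2) (GaloisField 2 m) κ) fun x => ?_
    rw [← h (a*x), map_add, Tr_eq_sum (by omega), Tr_eq_sum (by omega)]
    unfold ph
    have e1 : a*x+a = a*(x+1) := by ring
    rw [e1]
    simp only [mul_inv, mul_pow, mul_assoc]
  exact (mul_eq_zero.1 key).resolve_right (pow_ne_zero _ (inv_ne_zero ha))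

lemma main_const {m : ℕ} (hm : 4 ≤ m) {e : ℕ} (he : 0 < e) (heodd : Odd e)
    (hgcd : Nat.gcd e (2 ^ m - 1) = 1) (hb : (4*e+1)^4 ≤ 2^m)
    (f : GaloisField 2 m × GaloisField 2 m → ZMod 2)
    (hf : ∀ x y, f (x, y) = Tr m (y * (x⁻¹) ^ e)) (a b c d : GaloisField 2 m)
    (hli : LinearIndependent (ZMod 2) ![((a, b) : GaloisField 2 m × GaloisField 2 m), (c, d)])
    (κ : ZMod 2) (h : ∀ p, D2 f (a, b) (c, d) p = κ) : a = 0 ∧ c = 0 := by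
  haveI : Fintype (GaloisField 2 m) := Fintype.ofFinite _
  have hcard : Fintype.card (GaloisField 2 m) = 2^m := by
    rw [← Nat.card_eq_fintype_card, GaloisField.card 2 m (by omega)]
  have two : (2 : GaloisField 2 m) = 0 := CharTwo.two_eq_zero
  have hl := LinearIndependent.pair_iff.1 hli
  have hD : ∀ x y, Tr m (y * (x⁻¹)^e) + Tr m ((y+b) * ((x+a)⁻¹)^e) + Tr m ((y+d) * ((x+c)⁻¹)^e)
      + Tr m ((y+b+d) * ((x+a+c)⁻¹)^e) = κ := by
    intro x y
    have := h (x, y)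
    simpa only [D2, Prod.mk_add_mk, hf] using this
  by_cases ha : a = 0
  · refine ⟨ha, ?_⟩
    by_contra hc
    have hb0 : b = 0 := by
      refine const_deriv hm heodd hgcd hb c b κ hc fun x => ?_
      rw [← hD x 0, ← Tr_add', ← Tr_add', ← Tr_add', ← Tr_add']
      congr 1
      rw [ha, add_zero]
      linear_combination (-d * ((x+c)⁻¹)^e) * two
    have := hl 1 0 (by simp [ha, hb0])
    simp at this
  · exfalso
    by_cases hc : c = 0
    · have hd0 : d = 0 := by
        refine const_deriv hm heodd hgcd hb a d κ ha fun x => ?_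
        rw [← hD x 0, ← Tr_add', ← Tr_add', ← Tr_add', ← Tr_add']
        congr 1
        rw [hc, add_zero, add_zero]
        linear_combination (-b * ((x+a)⁻¹)^e) * two
      have := hl 0 1 (by simp [hc, hd0])
      simp at this
    · by_cases hac : a + c = 0
      · have hca : c = a := by linear_combination hac - a * two
        have hd0 : b + d = 0 := by
          refine const_deriv hm heodd hgcd hb a (b+d) κ ha fun x => ?_
          rw [← hD x 0, ← Tr_add', ← Tr_add', ← Tr_add', ← Tr_add']
          congr 1
          rw [add_assoc x a c, hac, hca, add_zero]
          ring
        have := hl 1 1 (by simp [hac, hd0])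
        simp at this
      · refine case_poly he hb hcard ha hc hac fun x => ?_
        apply Tr_nondeg
        intro y
        have h1 := hD x y
        have h2 := hD x 0
        have h3 : κ + κ = 0 := CharTwo.add_self_eq_zero κ
        rw [← Tr_add', ← Tr_add', ← Tr_add'] at h1 h2
        nth_rewrite 1 [← h1] at h3
        rw [← h2, ← Tr_add'] at h3
        rw [← h3]
        congr 1
        linear_combination (-b * ((x+a)⁻¹)^e - d * ((x+c)⁻¹)^e - (b+d) * ((x+a+c)⁻¹)^e) * two



/-- Corollary 4.7 (second-order derivative form): for `f̃(x,y) = Tr(y x^{-e})` with `e` odd,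
`gcd(e, 2^m-1) = 1` and `4e ≤ 2^{m/4} - 1`, and linearly independent `u = (a,b)`,
`v = (c,d)`: the second-order derivative `D_u D_v f̃` vanishes identically iff
`a = c = 0`, and `D_u D_v f̃` is never identically `1`. -/
theorem gPSap_monomial_decomposition
    (m : ℕ) (hm : 4 ≤ m) (e : ℕ) (he : 0 < e) (heodd : Odd e)
    (hgcd : Nat.gcd e (2 ^ m - 1) = 1)
    (hbound : (4 * e : ℝ) ≤ 2 ^ ((m : ℝ) / 4) - 1)
    (f : GaloisField 2 m × GaloisField 2 m → ZMod 2)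
    (hf : ∀ x y, f (x, y) = Tr m (y * (x⁻¹) ^ e)) :
    ∀ a b c d : GaloisField 2 m,
      LinearIndependent (ZMod 2) ![((a, b) : GaloisField 2 m × GaloisField 2 m), (c, d)] →
      ((∀ p : GaloisField 2 m × GaloisField 2 m, D2 f (a, b) (c, d) p = 0) ↔
          (a = 0 ∧ c = 0)) ∧
      ¬ (∀ p : GaloisField 2 m × GaloisField 2 m, D2 f (a, b) (c, d) p = 1) := by
  have hb := bnd hbound
  intro a b c d hli
  have hz : a = 0 ∧ c = 0 → ∀ p, D2 f (a, b) (c, d) p = 0 := by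
    rintro ⟨rfl, rfl⟩ ⟨x, y⟩
    have two : (2 : GaloisField 2 m) = 0 := CharTwo.two_eq_zero
    simp only [D2, Prod.mk_add_mk, hf, add_zero, ← Tr_add']
    have : y * x⁻¹ ^ e + (y + b) * x⁻¹ ^ e + (y + d) * x⁻¹ ^ e + (y + b + d) * x⁻¹ ^ e = 0 := by
      linear_combination (2*y+b+d) * x⁻¹^e * two
    rw [this]
    exact map_zero _
  refine ⟨⟨main_const hm he heodd hgcd hb f hf a b c d hli 0, hz⟩, fun h => ?_⟩
  have h0 := hz (main_const hm he heodd hgcd hb f hf a b c d hli 1 h) (0, 0)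
  rw [h] at h0
  exact one_ne_zero h0
end
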